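/- Let n ≥ 2 and let G be an almost controllable graph on Fin n with twins τ < τ′ such that the (τ,n)-cofactor of W(G) equals ±2^{⌊n/2⌋−1}·b for an odd, square-free, positive integer b. Let p be an odd prime dividing b and let β ∈ 𝔽_pⁿ be any nonzero vector with Ŵ(G)ᵀβ = 0 over 𝔽_p. Then α(G) (reduced mod p) and β are linearly independent over 𝔽_p, every vector x ∈ 𝔽_pⁿ with W(G)ᵀx = 0 over 𝔽_p is an 𝔽_p-linear combination of α(G) and β, and α(G)ᵀβ = 0 in 𝔽_p. -/

import Mathlib

/-!
The twins have equal rows in `W(G)`, so `α` is orthogonal to every column of `W(G)`, and the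
last-column cofactors at `τ` and `τ'` are opposite. Expanding along the last column gives
`det Ŵ(G) = -2 ξ_τ = ± 2^⌊n/2⌋ b`, which is divisible by `p` exactly once
(`det_hatW`). An integer matrix whose determinant is divisible by `p` exactly once has corank one
modulo `p`: otherwise `p` would divide its whole adjugate, whose determinant is `det ^ (N - 1)`
(`exists_adjugate_not_dvd`, `left_kernel_proportional`). Hence `β` spans the kernel of `Ŵ(G)ᵀ`.
Since `αᵀα = 2` is invertible modulo `p`, subtracting a multiple of `α` moves any vector of the
kernel of `W(G)ᵀ` into the kernel of `Ŵ(G)ᵀ`.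
-/

open Matrix

namespace AlmostControllableGraphs

variable {n : ℕ}

/-- The all-ones vector. -/
def eVec (m : ℕ) : Fin m → ℤ := fun _ => 1

/-- The walk matrix `W(G) = [e, Ae, A²e, …, A^{n-1}e]` (columns indexed by `Fin (n+2)`). -/
def walkMatrix (A : Matrix (Fin (n + 2)) (Fin (n + 2)) ℤ) :
    Matrix (Fin (n + 2)) (Fin (n + 2)) ℤ :=
  Matrix.of fun i j => ((A ^ (j : ℕ)) *ᵥ eVec (n + 2)) i

/-- `G` is almost controllable if its walk matrix has rank `n - 1` over `ℚ`. -/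
def IsAlmostControllable (A : Matrix (Fin (n + 2)) (Fin (n + 2)) ℤ) : Prop :=
  ((walkMatrix A).map ((↑) : ℤ → ℚ)).rank = n + 1

/-- The matrix `V = [e, Ae, …, A^{n-2}e]`, the first `n - 1` columns of the walk matrix. -/
def Vmat (A : Matrix (Fin (n + 2)) (Fin (n + 2)) ℤ) :
    Matrix (Fin (n + 2)) (Fin (n + 1)) ℤ :=
  Matrix.of fun i j => walkMatrix A i j.castSucc

/-- The matrix obtained from `V` by deleting row `i`. -/
def Xmat (A : Matrix (Fin (n + 2)) (Fin (n + 2)) ℤ) (i : Fin (n + 2)) :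
    Matrix (Fin (n + 1)) (Fin (n + 1)) ℤ :=
  Matrix.of fun r c => Vmat A (i.succAbove r) c

/-- The `(i, n)`-cofactor of the walk matrix: `(−1)^{n+i}` times the determinant of the
matrix obtained by deleting row `i` and the last column from `W(G)`.
(In 0-based indexing the sign is `(−1)^{i + (n-1)}`.) -/
def cofactorLast (A : Matrix (Fin (n + 2)) (Fin (n + 2)) ℤ) (i : Fin (n + 2)) : ℤ :=
  (-1 : ℤ) ^ ((i : ℕ) + (n + 1)) * (Xmat A i).det

/-- The vector `ξ(G)` of last-column cofactors of the walk matrix. -/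
def xiVec (A : Matrix (Fin (n + 2)) (Fin (n + 2)) ℤ) : Fin (n + 2) → ℤ :=
  fun i => cofactorLast A i

/-- The rational scalar `2^{1 - ⌊n/2⌋}`. -/
def twoPow (n : ℕ) : ℚ := (2 : ℚ) ^ ((1 : ℤ) - (((n + 2) / 2 : ℕ) : ℤ))

/-- The matrix `W_δ(G) = [e, Ae, …, A^{n-2}e, (−1)^δ·2^{1-⌊n/2⌋}·ξ(G)]`. -/
def Wdelta (A : Matrix (Fin (n + 2)) (Fin (n + 2)) ℤ) (δ : ℕ) :
    Matrix (Fin (n + 2)) (Fin (n + 2)) ℚ :=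
  Matrix.of fun i j =>
    if (j : ℕ) = n + 1 then (-1 : ℚ) ^ δ * twoPow n * (xiVec A i : ℚ)
    else ((walkMatrix A i j : ℤ) : ℚ)

/-- A matrix is regular orthogonal if it is orthogonal and has all row sums equal to 1. -/
def IsRegularOrthogonal {K : Type*} [Field K] {m : ℕ} (Q : Matrix (Fin m) (Fin m) K) : Prop :=
  Qᵀ * Q = 1 ∧ Q *ᵥ (fun _ => (1 : K)) = fun _ => 1

/-- Adjacency matrix of the complement graph. -/
def complMat (A : Matrix (Fin (n + 2)) (Fin (n + 2)) ℤ) :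
    Matrix (Fin (n + 2)) (Fin (n + 2)) ℤ :=
  Matrix.of fun i j => if i = j then 0 else 1 - A i j

/-- Two graphs are generalized cospectral if they are cospectral and so are their complements. -/
def GenCospectral (A B : Matrix (Fin (n + 2)) (Fin (n + 2)) ℤ) : Prop :=
  A.charpoly = B.charpoly ∧ (complMat A).charpoly = (complMat B).charpoly

/-- `τ` and `τ'` are twins: the transposition swapping them is an automorphism. -/
def IsTwinPair (A : Matrix (Fin (n + 2)) (Fin (n + 2)) ℤ) (τ τ' : Fin (n + 2)) : Prop :=
  ∀ i j, A (Equiv.swap τ τ' i) (Equiv.swap τ τ' j) = A i j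

/-- `λ₁(G) = −1` if the twins are adjacent and `0` otherwise; for a 0-1 matrix this
is `−A τ τ'`. -/
def lam1 (A : Matrix (Fin (n + 2)) (Fin (n + 2)) ℤ) (τ τ' : Fin (n + 2)) : ℤ :=
  -(A τ τ')

/-- The vector `α(G)` with entry `−1` at `τ`, `1` at `τ'`, and `0` elsewhere. -/
def alphaVec (τ τ' : Fin (n + 2)) : Fin (n + 2) → ℤ :=
  fun i => if i = τ then -1 else if i = τ' then 1 else 0

/-- The reduction of `α(G)` modulo `p`. -/
def alphaVecMod (p : ℕ) (τ τ' : Fin (n + 2)) : Fin (n + 2) → ZMod p :=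
  fun i => ((alphaVec τ τ' i : ℤ) : ZMod p)

/-- The matrix `Ŵ(G) = [e, Ae, …, A^{n-2}e, α(G)]`. -/
def hatW (A : Matrix (Fin (n + 2)) (Fin (n + 2)) ℤ) (τ τ' : Fin (n + 2)) :
    Matrix (Fin (n + 2)) (Fin (n + 2)) ℤ :=
  Matrix.of fun i j => if (j : ℕ) = n + 1 then alphaVec τ τ' i else walkMatrix A i j

/-- The level of a rational matrix: the smallest positive integer `ℓ` such that `ℓQ` is
an integer matrix. -/
noncomputable def level {m : ℕ} (Q : Matrix (Fin m) (Fin m) ℚ) : ℕ :=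
  sInf {k : ℕ | 0 < k ∧ ∀ i j, ((k : ℚ) * Q i j).den = 1}

/-- A permutation matrix. -/
def IsPermMatrix {m : ℕ} (Q : Matrix (Fin m) (Fin m) ℚ) : Prop :=
  ∃ σ : Equiv.Perm (Fin m), ∀ i j, Q i j = if σ i = j then 1 else 0

/-- `G` is determined by its generalized spectrum: every graph generalized cospectral with
`G` is isomorphic to `G`. -/
def IsDGS (A : Matrix (Fin (n + 2)) (Fin (n + 2)) ℤ) : Prop :=
  ∀ B : Matrix (Fin (n + 2)) (Fin (n + 2)) ℤ, B.IsAdjMatrix → GenCospectral A B →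
    ∃ σ : Equiv.Perm (Fin (n + 2)), ∀ i j, B i j = A (σ i) (σ j)


/-- If a prime divides the determinant exactly once, then it does not divide the whole adjugate. -/
lemma exists_adjugate_not_dvd {m : ℕ} (M : Matrix (Fin (m + 1)) (Fin (m + 1)) ℤ) {p : ℕ}
    (hp : p.Prime) (u : ℤ) (hdet : M.det = p * u) (hu : ¬ (p : ℤ) ∣ u) :
    ∃ i j, ¬ (p : ℤ) ∣ M.adjugate i j := by
  by_contra! h
  choose B hB using h
  have hadj : M.adjugate = (p : ℤ) • (Matrix.of B) := by
    ext i j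
    simpa using hB i j
  have h1 := M.det_adjugate
  rw [hadj, Matrix.det_smul, hdet] at h1
  simp only [Fintype.card_fin, Nat.add_sub_cancel, mul_pow, pow_succ] at h1
  have hpZ : Prime (p : ℤ) := Nat.prime_iff_prime_int.mp hp
  have h2 : (p : ℤ) * (Matrix.of B).det = u ^ m := by
    apply mul_left_cancel₀ (pow_ne_zero m hpZ.ne_zero)
    rw [← h1]
    ring
  exact hu (hpZ.dvd_of_dvd_pow (Dvd.intro _ h2))

/-- A nonzero entry of the adjugate forces the left kernel to be at most one-dimensional: replacing
row `j` by a unit vector gives an invertible matrix, so a left kernel vector is determined by its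
`j`-th coordinate. -/
lemma left_kernel_proportional {K : Type*} [Field K] {m : ℕ} (M : Matrix (Fin m) (Fin m) K)
    (i j : Fin m) (hij : M.adjugate i j ≠ 0) (x y : Fin m → K) (hx : x ᵥ* M = 0)
    (hy : y ᵥ* M = 0) (hy0 : y ≠ 0) : ∃ d : K, x = d • y := by
  rw [Matrix.adjugate_apply] at hij
  have key : ∀ z : Fin m → K, z ᵥ* M = 0 → z j = 0 → z = 0 := by
    intro z hz hzj
    apply Matrix.eq_zero_of_vecMul_eq_zero hij
    rw [← hz]
    ext k
    simp only [Matrix.vecMul, dotProduct]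
    refine Finset.sum_congr rfl fun l _ => ?_
    by_cases hl : l = j
    · subst hl
      simp [hzj]
    · rw [Matrix.updateRow_ne hl]
  have hyj : y j ≠ 0 := fun h => hy0 (key y hy h)
  refine ⟨x j / y j, sub_eq_zero.mp (key _ ?_ ?_)⟩
  · rw [Matrix.sub_vecMul, Matrix.smul_vecMul, hx, hy]
    simp
  · simp [hyj]

lemma pow_mulVec_swap (A : Matrix (Fin (n + 2)) (Fin (n + 2)) ℤ) (τ τ' : Fin (n + 2))
    (htw : IsTwinPair A τ τ') (k : ℕ) (i : Fin (n + 2)) :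
    ((A ^ k) *ᵥ eVec (n + 2)) (Equiv.swap τ τ' i) = ((A ^ k) *ᵥ eVec (n + 2)) i := by
  induction k generalizing i with
  | zero => simp [eVec]
  | succ k ih =>
    rw [pow_succ', ← Matrix.mulVec_mulVec]
    simp only [Matrix.mulVec, dotProduct] at ih ⊢
    rw [← Equiv.sum_comp (Equiv.swap τ τ')]
    refine Finset.sum_congr rfl fun j _ => ?_
    rw [htw, ih]

lemma walkMatrix_twin (A : Matrix (Fin (n + 2)) (Fin (n + 2)) ℤ) (τ τ' : Fin (n + 2))
    (htw : IsTwinPair A τ τ') (j : Fin (n + 2)) : walkMatrix A τ' j = walkMatrix A τ j := by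
  have := pow_mulVec_swap A τ τ' htw j τ
  rwa [Equiv.swap_apply_left] at this

/-- Expansion along the last column of the matrix `[e, Ae, …, A^{n-2}e, v]`. -/
lemma det_border (A : Matrix (Fin (n + 2)) (Fin (n + 2)) ℤ) (v : Fin (n + 2) → ℤ) :
    (Matrix.of fun i j : Fin (n + 2) => if (j : ℕ) = n + 1 then v i else walkMatrix A i j).det
      = ∑ i, v i * cofactorLast A i := by
  rw [Matrix.det_succ_column _ (Fin.last (n + 1))]
  refine Finset.sum_congr rfl fun i _ => ?_
  have hX : ((Matrix.of fun i j : Fin (n + 2) =>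
      if (j : ℕ) = n + 1 then v i else walkMatrix A i j).submatrix i.succAbove
        (Fin.last (n + 1)).succAbove) = Xmat A i := by
    ext r c
    have hc : (c : ℕ) ≠ n + 1 := c.isLt.ne
    simp [Xmat, Vmat, hc]
  rw [hX]
  simp only [Matrix.of_apply, Fin.val_last, if_true, cofactorLast]
  ring

/-- The cofactors at the twins are opposite, because `[e, Ae, …, A^{n-2}e, v]` with `v` the
indicator of `{τ, τ'}` has two equal rows. -/
lemma cofactorLast_twin (A : Matrix (Fin (n + 2)) (Fin (n + 2)) ℤ) (τ τ' : Fin (n + 2))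
    (hne : τ ≠ τ') (htw : IsTwinPair A τ τ') : cofactorLast A τ' = -cofactorLast A τ := by
  have h := det_border A (fun i => (if i = τ then 1 else 0) + (if i = τ' then 1 else 0))
  rw [Matrix.det_zero_of_row_eq hne] at h
  · simp only [add_mul, Finset.sum_add_distrib, ite_mul, one_mul, zero_mul, Finset.sum_ite_eq',
      Finset.mem_univ, if_true] at h
    linarith
  · ext j
    simp [walkMatrix_twin A τ τ' htw, hne, hne.symm]

lemma sum_alphaVec_mul {R : Type*} [CommRing R] (τ τ' : Fin (n + 2)) (hne : τ ≠ τ')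
    (f : Fin (n + 2) → R) : ∑ i, (alphaVec τ τ' i : R) * f i = f τ' - f τ := by
  have h : ∀ i, (alphaVec τ τ' i : R) * f i
      = (if i = τ' then f i else 0) - (if i = τ then f i else 0) := by
    intro i
    unfold alphaVec
    by_cases h1 : i = τ
    · subst h1
      simp [hne]
    · by_cases h2 : i = τ' <;> simp [h1, h2]
      subst h2
      simp [h1]
  simp only [h, Finset.sum_sub_distrib, Finset.sum_ite_eq', Finset.mem_univ, if_true]

lemma det_hatW (A : Matrix (Fin (n + 2)) (Fin (n + 2)) ℤ) (τ τ' : Fin (n + 2))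
    (hne : τ ≠ τ') (htw : IsTwinPair A τ τ') : (hatW A τ τ').det = -2 * cofactorLast A τ := by
  unfold hatW
  rw [det_border]
  have h := sum_alphaVec_mul τ τ' hne (cofactorLast A)
  simp only [Int.cast_id] at h
  rw [h, cofactorLast_twin A τ τ' hne htw]
  ring

/-- `α` and `β` are linearly independent mod `p`, span the kernel of
`W(G)ᵀ` over `𝔽_p`, and are orthogonal. -/
theorem alpha_beta_fundamental_system
    (n : ℕ) (A : Matrix (Fin (n + 2)) (Fin (n + 2)) ℤ)
    (hA : A.IsAdjMatrix) (hac : IsAlmostControllable A)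
    (τ τ' : Fin (n + 2)) (hlt : τ < τ') (htw : IsTwinPair A τ τ')
    (b : ℤ) (hodd : Odd b) (hsf : Squarefree b) (hpos : 0 < b)
    (hcof : cofactorLast A τ = 2 ^ ((n + 2) / 2 - 1) * b ∨
            cofactorLast A τ = -(2 ^ ((n + 2) / 2 - 1) * b))
    (p : ℕ) (hp : p.Prime) (hp2 : p ≠ 2) (hdvd : (p : ℤ) ∣ b)
    (β : Fin (n + 2) → ZMod p) (hβ : β ≠ 0)
    (hβW : ((hatW A τ τ').map ((↑) : ℤ → ZMod p))ᵀ *ᵥ β = 0) :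
    (∀ c d : ZMod p, c • alphaVecMod p τ τ' + d • β = 0 → c = 0 ∧ d = 0) ∧
    (∀ x : Fin (n + 2) → ZMod p,
      ((walkMatrix A).map ((↑) : ℤ → ZMod p))ᵀ *ᵥ x = 0 →
        ∃ c d : ZMod p, x = c • alphaVecMod p τ τ' + d • β) ∧
    alphaVecMod p τ τ' ⬝ᵥ β = 0 := by
  have : Fact p.Prime := ⟨hp⟩
  have hne : τ ≠ τ' := hlt.ne
  have hpZ : Prime (p : ℤ) := Nat.prime_iff_prime_int.mp hp
  have hp2Z : ¬ (p : ℤ) ∣ 2 := by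
    intro h
    exact hp2 ((Nat.prime_dvd_prime_iff_eq hp Nat.prime_two).mp (by exact_mod_cast h))
  have h2 : (2 : ZMod p) ≠ 0 := by
    intro h
    exact hp2Z ((ZMod.intCast_zmod_eq_zero_iff_dvd 2 p).mp (by exact_mod_cast h))
  -- `p` divides `det Ŵ` exactly once.
  obtain ⟨c, rfl⟩ := hdvd
  have hc : ¬ (p : ℤ) ∣ c := by
    rintro ⟨d, rfl⟩
    exact hpZ.not_isUnit (hsf p ⟨d, by ring⟩)
  have hu0 : ¬ (p : ℤ) ∣ 2 * 2 ^ ((n + 2) / 2 - 1) * c := by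
    intro h
    rcases hpZ.dvd_or_dvd h with h | h
    · rw [← pow_succ'] at h
      exact hp2Z (hpZ.dvd_of_dvd_pow h)
    · exact hc h
  obtain ⟨u, hdet, hu⟩ : ∃ u : ℤ, (hatW A τ τ').det = p * u ∧ ¬ (p : ℤ) ∣ u := by
    rw [det_hatW A τ τ' hne htw]
    rcases hcof with h | h
    · exact ⟨-(2 * 2 ^ ((n + 2) / 2 - 1) * c), by rw [h]; ring, by rwa [dvd_neg]⟩
    · exact ⟨2 * 2 ^ ((n + 2) / 2 - 1) * c, by rw [h]; ring, hu0⟩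
  obtain ⟨i, j, hij⟩ := exists_adjugate_not_dvd _ hp u hdet hu
  have hadj : ((hatW A τ τ').map ((↑) : ℤ → ZMod p)).adjugate i j ≠ 0 := by
    have h := RingHom.map_adjugate (Int.castRingHom (ZMod p)) (hatW A τ τ')
    have h' := congrFun (congrFun h i) j
    intro h0
    apply hij
    rw [← ZMod.intCast_zmod_eq_zero_iff_dvd]
    exact h'.trans h0
  have hαdot : ∀ x : Fin (n + 2) → ZMod p, alphaVecMod p τ τ' ⬝ᵥ x = x τ' - x τ :=
    fun x => sum_alphaVec_mul τ τ' hne x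
  have hατ : alphaVecMod p τ τ' τ = -1 := by simp [alphaVecMod, alphaVec]
  have hατ' : alphaVecMod p τ τ' τ' = 1 := by simp [alphaVecMod, alphaVec, hne.symm]
  have hαα : alphaVecMod p τ τ' ⬝ᵥ alphaVecMod p τ τ' = 2 := by
    rw [hαdot, hατ, hατ']
    ring
  have hlast : ∀ x : Fin (n + 2) → ZMod p,
      (((hatW A τ τ').map ((↑) : ℤ → ZMod p))ᵀ *ᵥ x) (Fin.last (n + 1))
        = alphaVecMod p τ τ' ⬝ᵥ x := by
    intro x
    simp [Matrix.mulVec, dotProduct, hatW, alphaVecMod]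
  have hαβ : alphaVecMod p τ τ' ⬝ᵥ β = 0 := by
    rw [← hlast, hβW]
    rfl
  have hαW : ((walkMatrix A).map ((↑) : ℤ → ZMod p))ᵀ *ᵥ alphaVecMod p τ τ' = 0 := by
    ext k
    simp only [Matrix.mulVec, Pi.zero_apply]
    rw [dotProduct_comm, hαdot]
    simp [walkMatrix_twin A τ τ' htw]
  refine ⟨?_, ?_, hαβ⟩
  · intro c d hcd
    have h := congrArg (fun v => alphaVecMod p τ τ' ⬝ᵥ v) hcd
    simp only [dotProduct_add, dotProduct_smul, hαα, hαβ, dotProduct_zero, smul_eq_mul, mul_zero,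
      add_zero] at h
    have hc0 : c = 0 := (mul_eq_zero.mp h).resolve_right h2
    subst hc0
    rw [zero_smul, zero_add] at hcd
    exact ⟨rfl, (smul_eq_zero.mp hcd).resolve_right hβ⟩
  · intro x hx
    set t : ZMod p := (alphaVecMod p τ τ' ⬝ᵥ x) / 2 with ht
    -- `x - t α` is orthogonal to `α` and to all columns of `W`, hence lies in the kernel of `Ŵᵀ`.
    have hker : ((hatW A τ τ').map ((↑) : ℤ → ZMod p))ᵀ *ᵥ (x - t • alphaVecMod p τ τ') = 0 := by
      ext k
      by_cases hk : (k : ℕ) = n + 1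
      · obtain rfl : k = Fin.last (n + 1) := Fin.ext hk
        rw [hlast, dotProduct_sub, dotProduct_smul, hαα, ht, smul_eq_mul, div_mul_cancel₀ _ h2]
        simp
      · have h0 : ((walkMatrix A).map ((↑) : ℤ → ZMod p))ᵀ *ᵥ (x - t • alphaVecMod p τ τ') = 0 := by
          rw [Matrix.mulVec_sub, Matrix.mulVec_smul, hx, hαW]
          simp
        rw [← h0]
        simp [Matrix.mulVec, dotProduct, hatW, hk]
    rw [Matrix.mulVec_transpose] at hker hβW
    obtain ⟨d, hd⟩ := left_kernel_proportional _ i j hadj _ β hker hβW hβ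
    exact ⟨t, d, by rw [← hd]; abel⟩

end AlmostControllableGraphs
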